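/- arXiv:1903.08273 — 2 statements merged into one kernel-verified Lean document; each statement's English description precedes it below -/
import Mathlib

section
/- Let c ≥ 7 and let J ⊆ S = ℚ[x_i : i ∈ ℤ/cℤ] be generated by the quadrics x_i x_j (cyclic distance ≥ 3) and x_i² − x_{i−1}x_{i−3}. Then the quotient ring S/J is a finite-dimensional ℚ-vector space of dimension exactly 4c + 2 (= 1 + c + 2c + c + 1). -/
/-!
The ideal `J` is generated by monomials and differences of monomials, so the quotient `S/J` is
spanned by classes of monomials. Rewriting with `x_i² = x_{i-1} x_{i-3}` shows that the monomials

`1`, `x_i`, `x_i x_{i+1}`, `x_i x_{i+2}`, `x_i x_{i+1} x_{i+2}`, `x_0 x_1 x_2²`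

span it: their span contains `1` and is stable under multiplication by every variable
(`span_eq_top`). In degree four all `x_i x_{i+1} x_{i+2}²` have the same class `e` (`soc_eq`),
all other monomials vanish, and every variable kills `e`.

Linear independence comes from Poincaré duality. The linear form `socForm`, the sum of the
coefficients of the `c` monomials `x_k x_{k+1} x_{k+2}²`, vanishes on `J` (`socForm_eq_zero`) and
takes the value `1` on `e`. The pairing `(u, v) ↦ socForm (u v)` matches every monomial of the list
with exactly one other (`socForm_pairing`): degree `d` is paired with degree `4 - d`, and within
degree two the `x_i x_{i+1}` are dual to the `x_i x_{i+2}`.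
-/

open MvPolynomial

/-- The ideal `J` of `ℚ[x_i : i ∈ ℤ/cℤ]` generated by the monomials `x_i x_j` for
pairs of cyclic distance `≥ 3` together with the binomials `x_i² − x_{i−1} x_{i−3}`. -/
noncomputable def cyclicQuadricIdeal (c : ℕ) [NeZero c] : Ideal (MvPolynomial (ZMod c) ℚ) :=
  Ideal.span
    ({p | ∃ i j : ZMod c, 3 ≤ (i - j).val ∧ 3 ≤ (j - i).val ∧ p = X i * X j} ∪
     {p | ∃ i : ZMod c, p = X i ^ 2 - X (i - 1) * X (i - 3)})

namespace CyclicQuadric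

/-! ### Arithmetic of small residues -/

section Residues

variable {c : ℕ}

lemma natCast_ne_zero (hc : 7 ≤ c) {n : ℕ} (h0 : 0 < n) (h : n < 7) : (n : ZMod c) ≠ 0 := by
  intro hn
  rw [ZMod.natCast_eq_zero_iff] at hn
  exact absurd (Nat.le_of_dvd h0 hn) (by omega)

lemma one_ne (hc : 7 ≤ c) : (1 : ZMod c) ≠ 0 := by
  simpa using natCast_ne_zero hc (n := 1) (by norm_num) (by norm_num)

lemma two_ne (hc : 7 ≤ c) : (2 : ZMod c) ≠ 0 := by
  simpa using natCast_ne_zero hc (n := 2) (by norm_num) (by norm_num)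

lemma three_ne (hc : 7 ≤ c) : (3 : ZMod c) ≠ 0 := by
  simpa using natCast_ne_zero hc (n := 3) (by norm_num) (by norm_num)

lemma four_ne (hc : 7 ≤ c) : (4 : ZMod c) ≠ 0 := by
  simpa using natCast_ne_zero hc (n := 4) (by norm_num) (by norm_num)

lemma val_natCast_far [NeZero c] (hc : 7 ≤ c) {n : ℕ} (h3 : 3 ≤ n) (h : n ≤ 4) :
    3 ≤ (n : ZMod c).val ∧ 3 ≤ (-(n : ZMod c)).val := by
  have hv : (n : ZMod c).val = n := ZMod.val_natCast_of_lt (by omega)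
  have : NeZero (n : ZMod c) := ⟨natCast_ne_zero hc (by omega) (by omega)⟩
  rw [ZMod.val_neg_of_ne_zero, hv]
  omega

lemma val_natCast_lt (hc : 7 ≤ c) : ∀ n : ℕ, n < 3 → (n : ZMod c).val < 3 := by
  intro n hn
  rwa [ZMod.val_natCast_of_lt (by omega)]

/-- A residue of small value is one of `0, 1, 2`. -/
lemma eq_of_val_lt [NeZero c] {d : ZMod c} (h : d.val < 3) : d = 0 ∨ d = 1 ∨ d = 2 := by
  have hd : ((d.val : ℕ) : ZMod c) = d := ZMod.natCast_zmod_val d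
  generalize d.val = n at h hd
  subst hd
  interval_cases n <;> simp

end Residues

/-! ### Relations in the quotient -/

section Relations

variable (c : ℕ) [NeZero c]

/-- The quotient ring `S/J`. -/
abbrev Quo : Type := MvPolynomial (ZMod c) ℚ ⧸ cyclicQuadricIdeal c

variable {c}

/-- The class of the variable `x_i` in `S/J`. -/
noncomputable def x (i : ZMod c) : Quo c := Ideal.Quotient.mk (cyclicQuadricIdeal c) (X i)

lemma far (i j : ZMod c) (h : 3 ≤ (i - j).val ∧ 3 ≤ (j - i).val) : x i * x j = 0 := by
  rw [x, x, ← map_mul, Ideal.Quotient.eq_zero_iff_mem]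
  exact Ideal.subset_span (Or.inl ⟨i, j, h.1, h.2, rfl⟩)

lemma sq (i j k : ZMod c) (hj : j = i + 2) (hk : k = i + 3) : x k * x k = x j * x i := by
  subst hj hk
  simp only [x, ← map_mul]
  rw [Ideal.Quotient.eq]
  refine Ideal.subset_span (Or.inr ⟨i + 3, ?_⟩)
  rw [show i + 3 - 1 = i + 2 by ring, show i + 3 - 3 = i by ring, pow_two]

lemma far_three (hc : 7 ≤ c) (i j : ZMod c) (h : j = i + 3) : x i * x j = 0 := by
  subst h
  have := val_natCast_far hc (n := 3) (by norm_num) (by norm_num)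
  refine far _ _ ⟨?_, ?_⟩
  · rw [show i - (i + 3) = -((3 : ℕ) : ZMod c) by push_cast; ring]; exact this.2
  · rw [show i + 3 - i = ((3 : ℕ) : ZMod c) by push_cast; ring]; exact this.1

lemma far_four (hc : 7 ≤ c) (i j : ZMod c) (h : j = i + 4) : x i * x j = 0 := by
  subst h
  have := val_natCast_far hc (n := 4) (by norm_num) (by norm_num)
  refine far _ _ ⟨?_, ?_⟩
  · rw [show i - (i + 4) = -((4 : ℕ) : ZMod c) by push_cast; ring]; exact this.2
  · rw [show i + 4 - i = ((4 : ℕ) : ZMod c) by push_cast; ring]; exact this.1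

lemma near_or_far (i j : ZMod c) :
    x i * x j = 0 ∨ j = i ∨ j = i + 1 ∨ j = i + 2 ∨ i = j + 1 ∨ i = j + 2 := by
  by_cases h1 : (i - j).val < 3
  · rcases eq_of_val_lt h1 with h | h | h
    · exact Or.inr (Or.inl (by linear_combination -h))
    · exact Or.inr (Or.inr (Or.inr (Or.inr (Or.inl (by linear_combination h)))))
    · exact Or.inr (Or.inr (Or.inr (Or.inr (Or.inr (by linear_combination h)))))
  by_cases h2 : (j - i).val < 3
  · rcases eq_of_val_lt h2 with h | h | h
    · exact Or.inr (Or.inl (by linear_combination h))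
    · exact Or.inr (Or.inr (Or.inl (by linear_combination h)))
    · exact Or.inr (Or.inr (Or.inr (Or.inl (by linear_combination h))))
  · exact Or.inl (far i j ⟨by omega, by omega⟩)

lemma sq_mul_succ (hc : 7 ≤ c) (i j : ZMod c) (h : j = i + 1) : x i * x i * x j = 0 := by
  linear_combination x j * sq (i - 3) (i - 1) i (by ring) (by ring) +
    x (i - 1) * far_four hc (i - 3) j (by rw [h]; ring)

lemma sq_mul_succ_succ (hc : 7 ≤ c) (i j : ZMod c) (h : j = i + 2) : x i * x i * x j = 0 := by
  linear_combination x j * sq (i - 3) (i - 1) i (by ring) (by ring) +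
    x (i - 3) * far_three hc (i - 1) j (by rw [h]; ring)

lemma sq_mul_pred_pred (i : ZMod c) :
    x (i + 3) * x (i + 3) * x (i + 1) = x i * x (i + 1) * x (i + 2) := by
  linear_combination x (i + 1) * sq i (i + 2) (i + 3) rfl rfl

lemma sq_mul_pred (i : ZMod c) :
    x (i + 4) * x (i + 4) * x (i + 3) = x i * x (i + 1) * x (i + 2) := by
  linear_combination x (i + 3) * sq (i + 1) (i + 3) (i + 4) (by ring) (by ring) +
    sq_mul_pred_pred i

lemma soc_succ (i : ZMod c) :
    x (i + 1) * x (i + 2) * x (i + 3) * x (i + 3) = x i * x (i + 1) * x (i + 2) * x (i + 2) := by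
  linear_combination x (i + 1) * x (i + 2) * sq i (i + 2) (i + 3) rfl rfl

/-- All the degree four monomials `x_i x_{i+1} x_{i+2}²` have the same class. -/
lemma soc_eq (i : ZMod c) :
    x i * x (i + 1) * x (i + 2) * x (i + 2) = x 0 * x 1 * x 2 * (x 2 : Quo c) := by
  obtain ⟨n, rfl⟩ := ZMod.natCast_zmod_surjective i
  induction n with
  | zero => simp
  | succ n ih =>
    rw [← ih]
    push_cast
    rw [show (n : ZMod c) + 1 + 1 = n + 2 by ring, show (n : ZMod c) + 1 + 2 = n + 3 by ring, soc_succ]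

lemma triple_mul (hc : 7 ≤ c) (i j : ZMod c) (h : j ≠ i + 2) :
    x i * x (i + 1) * x (i + 2) * x j = 0 := by
  rcases near_or_far i j with h0 | rfl | rfl | rfl | rfl | rfl
  · linear_combination x (i + 1) * x (i + 2) * h0
  · linear_combination x (j + 2) * sq_mul_succ hc j (j + 1) rfl
  · linear_combination x i * sq_mul_succ hc (i + 1) (i + 2) (by ring)
  · exact absurd rfl h
  · linear_combination x (j + 1) * x (j + 1 + 1) * far_three hc j (j + 1 + 2) (by ring)
  · linear_combination x (j + 2) * x (j + 2 + 2) * far_three hc j (j + 2 + 1) (by ring)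

lemma triple_mul_eq (hc : 7 ≤ c) (i j : ZMod c) :
    x i * x (i + 1) * x (i + 2) * x j = if j = i + 2 then x 0 * x 1 * x 2 * x 2 else 0 := by
  split_ifs with h
  · rw [h, soc_eq]
  · exact triple_mul hc i j h

lemma soc_mul (hc : 7 ≤ c) (j : ZMod c) : x 0 * x 1 * x 2 * x 2 * x j = 0 := by
  -- Represent the class by a product `x_i x_{i+1} x_{i+2}²` with `j ≠ i + 2`.
  rw [← soc_eq (j - 1)]
  linear_combination x (j - 1 + 2) * triple_mul hc (j - 1) j
    (fun h => one_ne hc (by linear_combination -h))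

lemma adj_mul_adj (hc : 7 ≤ c) (i j : ZMod c) : x i * x (i + 1) * (x j * x (j + 1)) = 0 := by
  rcases near_or_far i j with h0 | rfl | rfl | rfl | rfl | rfl
  · linear_combination x (i + 1) * x (j + 1) * h0
  · linear_combination x (j + 1) * sq_mul_succ hc j (j + 1) rfl
  · linear_combination x i * sq_mul_succ hc (i + 1) (i + 1 + 1) rfl
  · linear_combination x (i + 1) * x (i + 2) * far_three hc i (i + 2 + 1) (by ring)
  · linear_combination x j * sq_mul_succ hc (j + 1) (j + 1 + 1) rfl
  · linear_combination x (j + 1) * x (j + 2) * far_three hc j (j + 2 + 1) (by ring)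

lemma skip_mul_skip (hc : 7 ≤ c) (i j : ZMod c) : x i * x (i + 2) * (x j * x (j + 2)) = 0 := by
  rcases near_or_far i j with h0 | rfl | rfl | rfl | rfl | rfl
  · linear_combination x (i + 2) * x (j + 2) * h0
  · linear_combination x (j + 2) * sq_mul_succ_succ hc j (j + 2) rfl
  · linear_combination x (i + 1) * x (i + 2) * far_three hc i (i + 1 + 2) (by ring)
  · linear_combination x (i + 2) * x (i + 2) * far_four hc i (i + 2 + 2) (by ring)
  · linear_combination x (j + 1) * x (j + 2) * far_three hc j (j + 1 + 2) (by ring)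
  · linear_combination x (j + 2) * x (j + 2) * far_four hc j (j + 2 + 2) (by ring)

lemma adj_mul_skip (hc : 7 ≤ c) (i j : ZMod c) :
    x i * x (i + 1) * (x j * x (j + 2)) = if i = j + 1 then x 0 * x 1 * x 2 * x 2 else 0 := by
  split_ifs with h
  · subst h
    rw [← soc_eq j, show j + 1 + 1 = j + 2 by ring]; ring
  rcases near_or_far i j with h0 | rfl | rfl | rfl | rfl | rfl
  · linear_combination x (i + 1) * x (j + 2) * h0
  · linear_combination x (j + 2) * sq_mul_succ hc j (j + 1) rfl
  · linear_combination x (i + 1) * x (i + 1) * far_three hc i (i + 1 + 2) (by ring)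
  · linear_combination x (i + 1) * x (i + 2) * far_four hc i (i + 2 + 2) (by ring)
  · exact absurd rfl h
  · linear_combination x (j + 2) * x (j + 2) * far_three hc j (j + 2 + 1) (by ring)

end Relations

/-! ### The monomial basis and its span -/

section Span

variable (c : ℕ)

/-- Labels of the monomial basis of `S/J`; `adj i`, `skip i`, `triple i` and `soc` stand for
`x_i x_{i+1}`, `x_i x_{i+2}`, `x_i x_{i+1} x_{i+2}` and the socle generator `x_0 x_1 x_2²`. -/
inductive Label : Type
  | one
  | var (i : ZMod c)
  | adj (i : ZMod c)
  | skip (i : ZMod c)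
  | triple (i : ZMod c)
  | soc

/-- The labels, sorted by kind. -/
def labelEquiv :
    Label c ≃ Unit ⊕ ZMod c ⊕ ZMod c ⊕ ZMod c ⊕ ZMod c ⊕ Unit where
  toFun
    | .one => .inl ()
    | .var i => .inr (.inl i)
    | .adj i => .inr (.inr (.inl i))
    | .skip i => .inr (.inr (.inr (.inl i)))
    | .triple i => .inr (.inr (.inr (.inr (.inl i))))
    | .soc => .inr (.inr (.inr (.inr (.inr ()))))
  invFun
    | .inl _ => .one
    | .inr (.inl i) => .var i
    | .inr (.inr (.inl i)) => .adj i
    | .inr (.inr (.inr (.inl i))) => .skip i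
    | .inr (.inr (.inr (.inr (.inl i)))) => .triple i
    | .inr (.inr (.inr (.inr (.inr _)))) => .soc
  left_inv b := by cases b <;> rfl
  right_inv b := by rcases b with _ | _ | _ | _ | _ | _ <;> rfl

noncomputable instance [NeZero c] : Fintype (Label c) := Fintype.ofEquiv _ (labelEquiv c).symm

lemma card_label [NeZero c] : Fintype.card (Label c) = 4 * c + 2 := by
  rw [Fintype.card_congr (labelEquiv c)]
  simp [ZMod.card]
  ring

variable {c}

/-- The monomial of `S` carried by a label. -/
noncomputable def mon : Label c → MvPolynomial (ZMod c) ℚ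
  | .one => 1
  | .var i => X i
  | .adj i => X i * X (i + 1)
  | .skip i => X i * X (i + 2)
  | .triple i => X i * X (i + 1) * X (i + 2)
  | .soc => X 0 * X 1 * X 2 * X 2

variable [NeZero c]

/-- The class in `S/J` of the monomial carried by a label. -/
noncomputable def cls (b : Label c) : Quo c := Ideal.Quotient.mk (cyclicQuadricIdeal c) (mon b)

@[simp] lemma cls_one : cls (.one : Label c) = 1 := by simp [cls, mon]
@[simp] lemma cls_var (i : ZMod c) : cls (.var i) = x i := by simp [cls, mon, x]
@[simp] lemma cls_adj (i : ZMod c) : cls (.adj i) = x i * x (i + 1) := by simp [cls, mon, x]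
@[simp] lemma cls_skip (i : ZMod c) : cls (.skip i) = x i * x (i + 2) := by simp [cls, mon, x]
@[simp] lemma cls_triple (i : ZMod c) : cls (.triple i) = x i * x (i + 1) * x (i + 2) := by
  simp [cls, mon, x]
@[simp] lemma cls_soc : cls (.soc : Label c) = x 0 * x 1 * x 2 * x 2 := by simp [cls, mon, x]

/-- A product of a basis monomial and a variable is zero or again a basis monomial. -/
lemma cls_mul_x (hc : 7 ≤ c) (b : Label c) (j : ZMod c) :
    cls b * x j = 0 ∨ ∃ b', cls b * x j = cls b' := by
  rcases b with _ | i | i | i | i | _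
  · exact Or.inr ⟨.var j, by simp⟩
  · rcases near_or_far i j with h0 | rfl | rfl | rfl | rfl | rfl
    · exact Or.inl (by simpa using h0)
    · refine Or.inr ⟨.skip (j - 3), ?_⟩
      simp only [cls_var, cls_skip]
      rw [sq (j - 3) (j - 3 + 2) j rfl (by ring), mul_comm]
    · exact Or.inr ⟨.adj i, by simp⟩
    · exact Or.inr ⟨.skip i, by simp⟩
    · exact Or.inr ⟨.adj j, by simp [mul_comm]⟩
    · exact Or.inr ⟨.skip j, by simp [mul_comm]⟩
  · simp only [cls_adj]
    rcases near_or_far i j with h0 | rfl | rfl | rfl | rfl | rfl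
    · exact Or.inl (by linear_combination x (i + 1) * h0)
    · exact Or.inl (by linear_combination sq_mul_succ hc j (j + 1) rfl)
    · refine Or.inr ⟨.triple (i - 3), ?_⟩
      rw [cls_triple, ← sq_mul_pred, show i - 3 + 4 = i + 1 by ring, show i - 3 + 3 = i by ring]
      ring
    · exact Or.inr ⟨.triple i, by simp⟩
    · refine Or.inr ⟨.triple j, ?_⟩
      rw [cls_triple, show j + 1 + 1 = j + 2 by ring]
      ring
    · exact Or.inl (by linear_combination x (j + 2) * far_three hc j (j + 2 + 1) (by ring))
  · simp only [cls_skip]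
    rcases near_or_far i j with h0 | rfl | rfl | rfl | rfl | rfl
    · exact Or.inl (by linear_combination x (i + 2) * h0)
    · exact Or.inl (by linear_combination sq_mul_succ_succ hc j (j + 2) rfl)
    · exact Or.inr ⟨.triple i, by rw [cls_triple]; ring⟩
    · refine Or.inr ⟨.triple (i - 1), ?_⟩
      rw [cls_triple, ← sq_mul_pred_pred, show i - 1 + 3 = i + 2 by ring,
        show i - 1 + 1 = i by ring]
      ring
    · exact Or.inl (by linear_combination x (j + 1) * far_three hc j (j + 1 + 2) (by ring))
    · exact Or.inl (by linear_combination x (j + 2) * far_four hc j (j + 2 + 2) (by ring))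
  · by_cases h : j = i + 2
    · exact Or.inr ⟨.soc, by simp [h, soc_eq]⟩
    · exact Or.inl (by rw [cls_triple, triple_mul hc i j h])
  · exact Or.inl (by rw [cls_soc, soc_mul hc])

lemma span_eq_top (hc : 7 ≤ c) : Submodule.span ℚ (Set.range (cls (c := c))) = ⊤ := by
  have hmul : ∀ (j : ZMod c) (v : Quo c), v ∈ Submodule.span ℚ (Set.range (cls (c := c))) →
      v * x j ∈ Submodule.span ℚ (Set.range (cls (c := c))) := by
    intro j v hv
    induction hv using Submodule.span_induction with
    | mem v hv =>
      obtain ⟨b, rfl⟩ := hv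
      rcases cls_mul_x hc b j with h | ⟨b', h⟩
      · rw [h]; exact Submodule.zero_mem _
      · rw [h]; exact Submodule.subset_span ⟨b', rfl⟩
    | zero => rw [zero_mul]; exact Submodule.zero_mem _
    | add u v _ _ hu hv => rw [add_mul]; exact Submodule.add_mem _ hu hv
    | smul r v _ hv => rw [smul_mul_assoc]; exact Submodule.smul_mem _ r hv
  refine (Submodule.eq_top_iff').2 fun v => ?_
  obtain ⟨p, rfl⟩ := Ideal.Quotient.mk_surjective v
  induction p using MvPolynomial.induction_on with
  | C r =>
    have h : Ideal.Quotient.mk (cyclicQuadricIdeal c) (C r) = r • cls .one := by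
      rw [cls_one, ← map_one (Ideal.Quotient.mk (cyclicQuadricIdeal c)), ← mul_one (C r),
        ← MvPolynomial.smul_eq_C_mul]; rfl
    rw [h]
    exact Submodule.smul_mem _ r (Submodule.subset_span ⟨_, rfl⟩)
  | add p q hp hq => rw [map_add]; exact Submodule.add_mem _ hp hq
  | mul_X p j hp => rw [map_mul]; exact hmul j _ hp

end Span

/-! ### The socle form and duality -/

section Duality

variable {c : ℕ}

/-- The exponent vector of `x_k x_{k+1} x_{k+2}²`. -/
noncomputable def socExp (k : ZMod c) : ZMod c →₀ ℕ :=
  Finsupp.single k 1 + Finsupp.single (k + 1) 1 + Finsupp.single (k + 2) 2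

lemma socExp_pos {i k : ZMod c} (h : 1 ≤ socExp k i) : i = k ∨ i = k + 1 ∨ i = k + 2 := by
  by_contra! hn
  simp [socExp, hn.1.symm, hn.2.1.symm, hn.2.2.symm] at h

lemma socExp_two (hc : 7 ≤ c) {i k : ZMod c} (h : 2 ≤ socExp k i) : i = k + 2 := by
  by_contra hn
  have h1 := one_ne hc
  rcases socExp_pos (le_trans one_le_two h) with rfl | rfl | rfl
  · simp [socExp, h1, two_ne hc] at h
  · have : (2 : ZMod c) ≠ 1 := fun h' => h1 (by linear_combination h')
    simp [socExp, h1, this] at h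
  · exact hn rfl

lemma X_mul_X (i j : ZMod c) : (X i * X j : MvPolynomial (ZMod c) ℚ) =
    monomial (Finsupp.single i 1 + Finsupp.single j 1) 1 := by
  simp [X, monomial_mul]

/-- The degree of the monomial carried by a label. -/
def deg : Label c → ℕ
  | .one => 0
  | .var _ => 1
  | .adj _ => 2
  | .skip _ => 2
  | .triple _ => 3
  | .soc => 4

lemma mon_isHomogeneous (b : Label c) : (mon b).IsHomogeneous (deg b) := by
  have hX := fun i : ZMod c => isHomogeneous_X ℚ i
  cases b with
  | one => exact isHomogeneous_one _ _
  | var i => exact hX i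
  | adj i => exact (hX _).mul (hX _)
  | skip i => exact (hX _).mul (hX _)
  | triple i => exact ((hX _).mul (hX _)).mul (hX _)
  | soc => exact (((hX _).mul (hX _)).mul (hX _)).mul (hX _)

/-- The label dual to a given one under the pairing `(u, v) ↦ socForm (u v)`. -/
def dual : Label c → Label c
  | .one => .soc
  | .var i => .triple (i - 2)
  | .adj i => .skip (i - 1)
  | .skip i => .adj (i + 1)
  | .triple i => .var (i + 2)
  | .soc => .one

lemma deg_dual (b : Label c) : deg b + deg (dual b) = 4 := by cases b <;> rfl

variable [NeZero c]

/-- The linear form on `S` summing the coefficients of the monomials `x_k x_{k+1} x_{k+2}²`. -/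
noncomputable def socForm : MvPolynomial (ZMod c) ℚ →ₗ[ℚ] ℚ :=
  ∑ k : ZMod c, MvPolynomial.lcoeff ℚ (socExp k)

lemma socForm_apply (p : MvPolynomial (ZMod c) ℚ) :
    socForm p = ∑ k : ZMod c, coeff (socExp k) p := by
  simp [socForm, LinearMap.sum_apply]

lemma socForm_far (p : MvPolynomial (ZMod c) ℚ) (hc : 7 ≤ c) (i j : ZMod c)
    (h1 : 3 ≤ (i - j).val) (h2 : 3 ≤ (j - i).val) : socForm (p * (X i * X j)) = 0 := by
  rw [socForm_apply]
  refine Finset.sum_eq_zero fun k _ => ?_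
  rw [X_mul_X, coeff_mul_monomial', if_neg]
  intro hle
  have hi := hle i
  have hj := hle j
  have v0 := val_natCast_lt hc 0 (by norm_num)
  have v1 := val_natCast_lt hc 1 (by norm_num)
  have v2 := val_natCast_lt hc 2 (by norm_num)
  push_cast at v0 v1 v2
  rcases socExp_pos (i := i) (k := k) (le_trans (by simp) hi) with rfl | rfl | rfl <;>
  rcases socExp_pos (i := j) (k := _) (le_trans (by simp) hj) with h | h | h <;>
  subst h <;> ring_nf at h1 h2 <;> omega

/-- Each side of `x_{i+3}² = x_{i+2} x_i` divides `x_k x_{k+1} x_{k+2}²` for a single `k`, with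
the same cofactor `x_{i+1} x_{i+2}`. -/
lemma socForm_sq (hc : 7 ≤ c) (p : MvPolynomial (ZMod c) ℚ) (i : ZMod c) :
    socForm (p * (X (i + 3) * X (i + 3))) = socForm (p * (X (i + 2) * X i)) := by
  have hl : socForm (p * (X (i + 3) * X (i + 3))) =
      coeff (Finsupp.single (i + 1) 1 + Finsupp.single (i + 2) 1) p := by
    rw [socForm_apply, Finset.sum_eq_single (i + 1)]
    · rw [X_mul_X, show socExp (i + 1) = (Finsupp.single (i + 1) 1 + Finsupp.single (i + 2) 1) +
        (Finsupp.single (i + 3) 1 + Finsupp.single (i + 3) 1) by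
          rw [socExp, ← Finsupp.single_add, show i + 1 + 1 = i + 2 by ring,
            show i + 1 + 2 = i + 3 by ring], coeff_mul_monomial, mul_one]
    · intro k _ hk
      rw [X_mul_X, coeff_mul_monomial', if_neg]
      intro hle
      have h2 := socExp_two hc (i := i + 3) (k := k) (le_trans (by simp) (hle (i + 3)))
      exact hk (by linear_combination -h2)
    · simp
  have hr : socForm (p * (X (i + 2) * X i)) =
      coeff (Finsupp.single (i + 1) 1 + Finsupp.single (i + 2) 1) p := by
    rw [socForm_apply, Finset.sum_eq_single i]
    · rw [X_mul_X, show socExp i = (Finsupp.single (i + 1) 1 + Finsupp.single (i + 2) 1) +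
        (Finsupp.single (i + 2) 1 + Finsupp.single i 1) by
          rw [socExp, show (2 : ℕ) = 1 + 1 from rfl, Finsupp.single_add]; abel,
        coeff_mul_monomial, mul_one]
    · intro k _ hk
      rw [X_mul_X, coeff_mul_monomial', if_neg]
      intro hle
      have ha := socExp_pos (i := i) (k := k) (le_trans (by simp) (hle i))
      have hb := socExp_pos (i := i + 2) (k := k) (le_trans (by simp) (hle (i + 2)))
      rcases ha with ha | ha | ha
      · exact hk ha.symm
      · rcases hb with hb | hb | hb
        · exact three_ne hc (by linear_combination hb - ha)
        · exact two_ne hc (by linear_combination hb - ha)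
        · exact one_ne hc (by linear_combination hb - ha)
      · rcases hb with hb | hb | hb
        · exact four_ne hc (by linear_combination hb - ha)
        · exact three_ne hc (by linear_combination hb - ha)
        · exact two_ne hc (by linear_combination hb - ha)
    · simp
  rw [hl, hr]

lemma socForm_eq_zero (hc : 7 ≤ c) {p : MvPolynomial (ZMod c) ℚ}
    (hp : p ∈ cyclicQuadricIdeal c) : socForm p = 0 := by
  -- Multiples `r * g` of generators have to be tested, since `socForm` is only `ℚ`-linear.
  suffices h : ∀ r, socForm (r * p) = 0 by simpa using h 1
  unfold cyclicQuadricIdeal at hp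
  induction hp using Submodule.span_induction with
  | mem g hg =>
    intro r
    rcases hg with ⟨i, j, h1, h2, rfl⟩ | ⟨i, rfl⟩
    · exact socForm_far r hc i j h1 h2
    · have h := socForm_sq hc r (i - 3)
      rw [show i - 3 + 3 = i by ring, show i - 3 + 2 = i - 1 by ring] at h
      rw [mul_sub, map_sub, pow_two, h, sub_self]
  | zero => simp
  | add p q _ _ hp hq => intro r; rw [mul_add, map_add, hp, hq, add_zero]
  | smul s p _ hp => intro r; rw [smul_eq_mul, ← mul_assoc]; exact hp _

lemma socForm_soc (hc : 7 ≤ c) : socForm (mon (.soc : Label c)) = 1 := by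
  have hm : mon (.soc : Label c) = monomial (socExp 0) 1 := by
    simp [mon, X, monomial_mul, socExp, add_assoc, ← Finsupp.single_add]
  rw [hm, socForm_apply, Finset.sum_eq_single 0]
  · simp
  · intro k _ hk
    rw [coeff_monomial, if_neg]
    intro he
    have h2 : 2 ≤ socExp (0 : ZMod c) (k + 2) := by
      rw [he]; simp [socExp]
    exact hk (by linear_combination socExp_two hc h2)
  · simp

lemma socForm_of_isHomogeneous {p : MvPolynomial (ZMod c) ℚ} {n : ℕ} (hp : p.IsHomogeneous n)
    (hn : n ≠ 4) : socForm p = 0 := by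
  rw [socForm_apply]
  refine Finset.sum_eq_zero fun k _ => hp.coeff_eq_zero ?_
  simp only [socExp, map_add, Finsupp.degree_single]
  omega

lemma socForm_congr (hc : 7 ≤ c) {p q : MvPolynomial (ZMod c) ℚ}
    (h : Ideal.Quotient.mk (cyclicQuadricIdeal c) p = Ideal.Quotient.mk _ q) :
    socForm p = socForm q := by
  rw [← sub_eq_zero, ← map_sub]
  exact socForm_eq_zero hc (Ideal.Quotient.eq.1 h)

open Classical in
/-- In complementary degrees, products of basis monomials are governed by `dual`. -/
lemma cls_mul_dual (hc : 7 ≤ c) (b b' : Label c) (h : deg b = deg b') :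
    cls b * cls (dual b') = if b = b' then cls .soc else 0 := by
  rcases b with _ | i | i | i | i | _ <;> rcases b' with _ | j | j | j | j | _ <;>
    first
    | (simp [deg] at h; done)
    | simp only [dual, cls_one, cls_var, cls_adj, cls_skip, cls_triple, cls_soc, Label.var.injEq,
        Label.adj.injEq, Label.skip.injEq, Label.triple.injEq, reduceCtorEq, if_true, if_false,
        one_mul, mul_one]
  · rw [mul_comm, triple_mul_eq hc, sub_add_cancel]
  · rw [adj_mul_skip hc, sub_add_cancel]
  · exact adj_mul_adj hc _ _
  · exact skip_mul_skip hc _ _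
  · rw [mul_comm, adj_mul_skip hc]
    simp [eq_comm]
  · rw [triple_mul_eq hc]
    simp [eq_comm]

open Classical in
lemma socForm_pairing (hc : 7 ≤ c) (b b' : Label c) :
    socForm (mon b * mon (dual b')) = if b = b' then 1 else 0 := by
  by_cases h : deg b = deg b'
  · have hm := cls_mul_dual hc b b' h
    split_ifs at hm ⊢
    · rw [← socForm_soc hc]
      exact socForm_congr hc (by rw [map_mul]; exact hm)
    · rw [← map_zero (socForm (c := c))]
      exact socForm_congr hc (by rw [map_mul, map_zero]; exact hm)
  · rw [if_neg (fun hb => h (by rw [hb]))]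
    refine socForm_of_isHomogeneous ((mon_isHomogeneous b).mul (mon_isHomogeneous (dual b'))) ?_
    have := deg_dual b'
    omega

lemma linearIndependent_cls (hc : 7 ≤ c) : LinearIndependent ℚ (cls (c := c)) := by
  rw [Fintype.linearIndependent_iff]
  intro g hg b
  have hmem : ∑ b', g b' • mon b' ∈ cyclicQuadricIdeal c := by
    rw [← Ideal.Quotient.eq_zero_iff_mem, ← hg, map_sum]
    rfl
  have h0 := socForm_eq_zero hc (Ideal.mul_mem_right (mon (dual b)) _ hmem)
  classical
  simpa [Finset.sum_mul, socForm_pairing hc] using h0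

end Duality

end CyclicQuadric

/-- For `c ≥ 7`, the quotient `S/J` is a `ℚ`-vector space of dimension exactly
`4c + 2 = 1 + c + 2c + c + 1`. -/
theorem quotient_finrank (c : ℕ) (hc : 7 ≤ c) [NeZero c] :
    Module.finrank ℚ (MvPolynomial (ZMod c) ℚ ⧸ cyclicQuadricIdeal c) = 4 * c + 2 := by
  rw [Module.finrank_eq_card_basis (Module.Basis.mk (CyclicQuadric.linearIndependent_cls hc)
    (CyclicQuadric.span_eq_top hc).ge), CyclicQuadric.card_label]
end

section
/- In S = ℚ[x_0, …, x_5], let G = Σ_{i ∈ ℤ/6ℤ} x_i x_{i+1} x_{i+2}² + x_0 x_5 x_4² + x_0 x_5³. The ℚ-vector space of symmetric 6×6 rational matrices a = (a_{ij}) satisfying Σ_{i,j} a_{ij} ∂_i ∂_j G = 0 has dimension exactly 9. (Equivalently, the space of quadrics annihilating G is 9-dimensional, matching the 9 quadric generators of the ideal I_G.) -/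
/-!
All second derivatives of `G` are quadrics, so `Σ a_{ij} ∂_i ∂_j G` is a quadratic form in
`x_0, …, x_5` whose coefficients are linear forms in the entries of `a`; `quadricAction_eq`
computes it. It involves 18 monomials. A quadratic form vanishes as soon as it vanishes at the
points `e_i` and `e_i + e_j`, and evaluating there gives the linear system for `a`
(`quadricAction_eq_zero_iff`). The system has rank 12 in the 21 entries `a_{ij}`, `i ≤ j`: it kills
`a₀₁, a₀₅, a₁₂, a₂₃, a₃₄, a₄₅` and determines `a₂₂, a₂₄, a₃₃, a₃₅, a₄₄, a₅₅` from the remaining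
nine, which are free. Reading off those nine entries is a linear isomorphism
`symQuadricAnnG ≃ ℚ⁹` (`annEquiv`), with inverse `annMatrix`.
-/

open MvPolynomial

/-- The inverse polynomial `G = Σ_{i ∈ ℤ/6ℤ} x_i x_{i+1} x_{i+2}² + x_0 x_5 x_4² + x_0 x_5³`
in `ℚ[x_0, …, x_5]` (indices in the sum read modulo 6). -/
noncomputable def migliorNagelG : MvPolynomial (Fin 6) ℚ :=
  (∑ i : Fin 6, X i * X (i + 1) * X (i + 2) ^ 2) + X 0 * X 5 * X 4 ^ 2 + X 0 * X 5 ^ 3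

/-- The `ℚ`-submodule of symmetric `6 × 6` rational matrices `a = (a_{ij})` with
`Σ_{i,j} a_{ij} ∂_i ∂_j G = 0`. -/
noncomputable def symQuadricAnnG : Submodule ℚ (Matrix (Fin 6) (Fin 6) ℚ) where
  carrier := {a | a.IsSymm ∧
    ∑ i : Fin 6, ∑ j : Fin 6, a i j • pderiv i (pderiv j migliorNagelG) = 0}
  zero_mem' := by
    refine ⟨Matrix.isSymm_zero, ?_⟩
    simp
  add_mem' := by
    rintro a b ⟨ha1, ha2⟩ ⟨hb1, hb2⟩
    refine ⟨ha1.add hb1, ?_⟩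
    simp only [Matrix.add_apply, add_smul, Finset.sum_add_distrib]
    rw [ha2, hb2, add_zero]
  smul_mem' := by
    rintro r a ⟨ha1, ha2⟩
    refine ⟨ha1.smul r, ?_⟩
    simp only [Matrix.smul_apply, smul_eq_mul, mul_smul, ← Finset.smul_sum]
    rw [ha2, smul_zero]

/-- The quadric `Σ a_{ij} ∂_i ∂_j G`, written out for symmetric `a` and grouped by monomials. -/
lemma quadricAction_eq (a : Matrix (Fin 6) (Fin 6) ℚ) (ha : a.IsSymm) :
    ∑ i : Fin 6, ∑ j : Fin 6, a i j • pderiv i (pderiv j migliorNagelG) =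
      C (6 * a 0 5 + 2 * a 3 4) * X 5 ^ 2
      + C (2 * a 0 0 + 4 * a 0 4 + 4 * a 3 5) * (X 4 * X 5)
      + C (2 * a 0 5 + 2 * a 2 3) * X 4 ^ 2
      + C (4 * a 4 5) * (X 3 * X 5)
      + C (4 * a 2 4 + 2 * a 5 5) * (X 3 * X 4)
      + C (2 * a 1 2) * X 3 ^ 2
      + C (4 * a 3 4) * (X 2 * X 4)
      + C (4 * a 1 3 + 2 * a 4 4) * (X 2 * X 3)
      + C (2 * a 0 1) * X 2 ^ 2
      + C (4 * a 0 1) * (X 1 * X 5)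
      + C (4 * a 2 3) * (X 1 * X 3)
      + C (4 * a 0 2 + 2 * a 3 3) * (X 1 * X 2)
      + C (2 * a 0 5) * X 1 ^ 2
      + C (4 * a 0 4 + 2 * a 1 1 + 2 * a 4 4 + 6 * a 5 5) * (X 0 * X 5)
      + C (4 * a 0 5 + 4 * a 4 5) * (X 0 * X 4)
      + C (4 * a 1 2) * (X 0 * X 2)
      + C (4 * a 1 5 + 2 * a 2 2) * (X 0 * X 1)
      + C (2 * a 4 5) * X 0 ^ 2 := by
  have hG : migliorNagelG = X 0 * X 1 * X 2 ^ 2 + X 1 * X 2 * X 3 ^ 2 + X 2 * X 3 * X 4 ^ 2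
      + X 3 * X 4 * X 5 ^ 2 + X 4 * X 5 * X 0 ^ 2 + X 5 * X 0 * X 1 ^ 2
      + X 0 * X 5 * X 4 ^ 2 + X 0 * X 5 ^ 3 := by
    simp only [migliorNagelG, Fin.sum_univ_six]
    rfl
  have s (i j : Fin 6) : a j i = a i j := ha.apply i j
  rw [hG]
  simp only [Fin.sum_univ_six, smul_eq_C_mul]
  rw [s 0 1, s 0 2, s 0 3, s 0 4, s 0 5, s 1 2, s 1 3, s 1 4, s 1 5, s 2 3, s 2 4, s 2 5,
    s 3 4, s 3 5, s 4 5]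
  have d2 (i : Fin 6) : pderiv i (2 : MvPolynomial (Fin 6) ℚ) = 0 := (pderiv i).map_natCast 2
  have d3 (i : Fin 6) : pderiv i (3 : MvPolynomial (Fin 6) ℚ) = 0 := (pderiv i).map_natCast 3
  simp [pderiv_X, Derivation.leibniz, Derivation.leibniz_pow, d2, d3]
  have h2 : (C (2 : ℚ) : MvPolynomial (Fin 6) ℚ) = 2 := map_ofNat C 2
  have h4 : (C (4 : ℚ) : MvPolynomial (Fin 6) ℚ) = 4 := map_ofNat C 4
  have h6 : (C (6 : ℚ) : MvPolynomial (Fin 6) ℚ) = 6 := map_ofNat C 6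
  simp only [h2, h4, h6]
  ring

/-- The linear system cut out by annihilation of `G`, in solved form. -/
lemma quadricAction_eq_zero_iff (a : Matrix (Fin 6) (Fin 6) ℚ) (ha : a.IsSymm) :
    ∑ i : Fin 6, ∑ j : Fin 6, a i j • pderiv i (pderiv j migliorNagelG) = 0 ↔
      (a 0 1 = 0 ∧ a 0 5 = 0 ∧ a 1 2 = 0 ∧ a 2 3 = 0 ∧ a 3 4 = 0 ∧ a 4 5 = 0) ∧
      a 2 2 = -2 * a 1 5 ∧ a 3 3 = -2 * a 0 2 ∧ a 4 4 = -2 * a 1 3 ∧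
      a 3 5 = -a 0 0 / 2 - a 0 4 ∧
      a 5 5 = -2 / 3 * a 0 4 - a 1 1 / 3 + 2 / 3 * a 1 3 ∧
      a 2 4 = a 0 4 / 3 + a 1 1 / 6 - a 1 3 / 3 := by
  rw [quadricAction_eq a ha]
  constructor
  · intro h
    have e (v : Fin 6 → ℚ) := congrArg (eval v) h
    simp only [map_add, map_mul, map_pow, eval_C, eval_X, map_zero] at e
    -- the coefficient of `x_i ^ 2` is the value at `e_i`
    have e0 := e ![1, 0, 0, 0, 0, 0]
    have e1 := e ![0, 1, 0, 0, 0, 0]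
    have e2 := e ![0, 0, 1, 0, 0, 0]
    have e3 := e ![0, 0, 0, 1, 0, 0]
    have e4 := e ![0, 0, 0, 0, 1, 0]
    have e5 := e ![0, 0, 0, 0, 0, 1]
    -- the coefficient of `x_i x_j` is the value at `e_i + e_j` corrected by those at `e_i`, `e_j`
    have e01 := e ![1, 1, 0, 0, 0, 0]
    have e05 := e ![1, 0, 0, 0, 0, 1]
    have e12 := e ![0, 1, 1, 0, 0, 0]
    have e23 := e ![0, 0, 1, 1, 0, 0]
    have e34 := e ![0, 0, 0, 1, 1, 0]
    have e45 := e ![0, 0, 0, 0, 1, 1]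
    simp at e0 e1 e2 e3 e4 e5 e01 e05 e12 e23 e34 e45
    refine ⟨⟨?_, ?_, ?_, ?_, ?_, ?_⟩, ?_, ?_, ?_, ?_, ?_, ?_⟩ <;> linarith
  · rintro ⟨⟨h01, h05, h12, h23, h34, h45⟩, h22, h33, h44, h35, h55, h24⟩
    rw [h01, h05, h12, h23, h34, h45, h22, h33, h44, h35, h55, h24]
    ring_nf
    simp

/-- The symmetric matrix annihilating `G` with prescribed free entries
`a₀₀, a₀₂, a₀₃, a₀₄, a₁₁, a₁₃, a₁₄, a₁₅, a₂₅` (in this order). -/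
def annMatrix (v : Fin 9 → ℚ) : Matrix (Fin 6) (Fin 6) ℚ :=
  !![v 0, 0, v 1, v 2, v 3, 0;
     0, v 4, 0, v 5, v 6, v 7;
     v 1, 0, -2 * v 7, 0, v 3 / 3 + v 4 / 6 - v 5 / 3, v 8;
     v 2, v 5, 0, -2 * v 1, 0, -v 0 / 2 - v 3;
     v 3, v 6, v 3 / 3 + v 4 / 6 - v 5 / 3, 0, -2 * v 5, 0;
     0, v 7, v 8, -v 0 / 2 - v 3, 0, -2 / 3 * v 3 - v 4 / 3 + 2 / 3 * v 5]

lemma annMatrix_isSymm (v : Fin 9 → ℚ) : (annMatrix v).IsSymm := by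
  ext i j
  fin_cases i <;> fin_cases j <;> rfl

lemma annMatrix_mem (v : Fin 9 → ℚ) : annMatrix v ∈ symQuadricAnnG := by
  refine ⟨annMatrix_isSymm v, ?_⟩
  rw [quadricAction_eq_zero_iff _ (annMatrix_isSymm v)]
  refine ⟨⟨?_, ?_, ?_, ?_, ?_, ?_⟩, ?_, ?_, ?_, ?_, ?_, ?_⟩ <;> rfl

/-- The nine free entries are linear coordinates on `symQuadricAnnG`. -/
def annEquiv : symQuadricAnnG ≃ₗ[ℚ] (Fin 9 → ℚ) where
  toFun a := ![a.1 0 0, a.1 0 2, a.1 0 3, a.1 0 4, a.1 1 1, a.1 1 3, a.1 1 4, a.1 1 5, a.1 2 5]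
  map_add' a b := by
    ext k
    fin_cases k <;> rfl
  map_smul' r a := by
    ext k
    fin_cases k <;> rfl
  invFun v := ⟨annMatrix v, annMatrix_mem v⟩
  left_inv := by
    rintro ⟨a, ha, h⟩
    obtain ⟨⟨h01, h05, h12, h23, h34, h45⟩, h22, h33, h44, h35, h55, h24⟩ :=
      (quadricAction_eq_zero_iff a ha).1 h
    have s (i j : Fin 6) : a j i = a i j := ha.apply i j
    apply Subtype.ext
    change annMatrix ![a 0 0, a 0 2, a 0 3, a 0 4, a 1 1, a 1 3, a 1 4, a 1 5, a 2 5] = a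
    ext i j
    -- by symmetry it suffices to compare entries on and above the diagonal
    wlog hij : i ≤ j generalizing i j
    · have := this j i (le_of_not_ge hij)
      rw [s j i, ← this]
      exact (annMatrix_isSymm _).apply j i
    fin_cases i <;> fin_cases j <;>
      first
        | exact absurd hij (by decide)
        | simp [annMatrix, *]
  right_inv v := by
    ext k
    fin_cases k <;> rfl

/-- The space of symmetric `6 × 6` rational matrices annihilating `G` as second-order
differential operators has dimension exactly `9`: the space of quadrics annihilating
`G` is 9-dimensional, matching the 9 quadric generators of `I_G`. -/
theorem symQuadricAnnG_finrank : Module.finrank ℚ symQuadricAnnG = 9 := by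
  rw [annEquiv.finrank_eq]
  simp
end
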